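/- arXiv:1709.02185 — 4 statements merged into one kernel-verified Lean document; each statement's English description precedes it below -/
import Mathlib

section
/- Let s ⊆ ℝ be a set and let f, g : ℝ → ℝ. Then the total variation of the pointwise maximum plus the total variation of the pointwise minimum is bounded by the sum of the total variations: eVariationOn (fun x => max (f x) (g x)) s + eVariationOn (fun x => min (f x) (g x)) s ≤ eVariationOn f s + eVariationOn g s (an inequality in ℝ≥0∞). In particular, if f and g both have bounded variation on s, then so do max(f,g) and min(f,g). -/
open Filter Set

/-!
On two points the inequality is the four-point rearrangement inequality
`|max a b - max c d| + |min a b - min c d| ≤ |a - c| + |b - d|`. Summing it along a monotone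
enumeration gives the claim on any finite set. The two suprema on the left are taken over
independent partitions of `s`; the points of one partition for the maximum and one for the minimum
together form a finite subset of `s`, and passing to it reduces the general case to the finite one.
-/

lemma edist_max_add_edist_min_le (a b c d : ℝ) :
    edist (max a b) (max c d) + edist (min a b) (min c d) ≤ edist a c + edist b d := by
  simp only [edist_dist]
  rw [← ENNReal.ofReal_add dist_nonneg dist_nonneg, ← ENNReal.ofReal_add dist_nonneg dist_nonneg]
  apply ENNReal.ofReal_le_ofReal
  simp only [Real.dist_eq]
  grind

/-- A nonempty finite set is listed in increasing order by a monotone sequence, constant from some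
index on. -/
lemma finset_exists_monotone_image_Iic (t : Finset ℝ) (ht : t.Nonempty) :
    ∃ (w : ℕ → ℝ) (k : ℕ), Monotone w ∧ (t : Set ℝ) = w '' Iic k := by
  have hcard := t.card_pos.2 ht
  let w : ℕ → ℝ := fun n ↦ t.orderEmbOfFin rfl ⟨min n (t.card - 1), by grind⟩
  refine ⟨w, t.card - 1, fun _ _ _ ↦ OrderEmbedding.monotone _ (by grind), ?_⟩
  ext
  simp only [← t.range_orderEmbOfFin rfl, mem_image, mem_Iic, mem_range, w]
  constructor
  · rintro ⟨i, rfl⟩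
    exact ⟨i.val, by grind⟩
  · rintro ⟨i, hi, rfl⟩
    use ⟨i, by omega⟩
    congr
    omega

lemma eVariationOn_max_add_min_le_of_finset (t : Finset ℝ) (ht : t.Nonempty) (f g : ℝ → ℝ) :
    eVariationOn (fun x => max (f x) (g x)) t + eVariationOn (fun x => min (f x) (g x)) t ≤
      eVariationOn f t + eVariationOn g t := by
  obtain ⟨w, k, hw, h⟩ := finset_exists_monotone_image_Iic t ht
  rw [h]
  simp only [eVariationOn.image_range_of_monotone _ hw, ← Finset.sum_add_distrib]
  exact Finset.sum_le_sum fun i _ ↦ edist_max_add_edist_min_le _ _ _ _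

lemma eVariationOn_max_add_min_le (s : Set ℝ) (f g : ℝ → ℝ) :
    eVariationOn (fun x => max (f x) (g x)) s + eVariationOn (fun x => min (f x) (g x)) s ≤
      eVariationOn f s + eVariationOn g s := by
  obtain rfl | ⟨x, hx⟩ := s.eq_empty_or_nonempty
  · simp
  have : Nonempty { u : ℕ → ℝ // Monotone u ∧ ∀ i, u i ∈ s } :=
    eVariationOn.nonempty_monotone_mem ⟨x, hx⟩
  refine ENNReal.iSup_add_iSup_le ?_
  rintro ⟨n, u, hu, us⟩ ⟨m, v, hv, vs⟩
  -- the common refinement of the two partitions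
  let t : Finset ℝ := (Finset.Iic n).image u ∪ (Finset.Iic m).image v
  have ht : t.Nonempty := ⟨u 0, by simp only [t, Finset.mem_union, Finset.mem_image]; grind⟩
  have hts : (t : Set ℝ) ⊆ s := by
    intro y hy
    simp only [t, Finset.coe_union, Finset.coe_image] at hy
    grind
  calc
    _ ≤ eVariationOn (fun x => max (f x) (g x)) t + eVariationOn (fun x => min (f x) (g x)) t := by
      refine add_le_add
        (eVariationOn.sum_le_of_monotoneOn_Iic (f := fun x => max (f x) (g x))
          (hu.monotoneOn _) fun i hi ↦ ?_)
        (eVariationOn.sum_le_of_monotoneOn_Iic (f := fun x => min (f x) (g x))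
          (hv.monotoneOn _) fun i hi ↦ ?_)
      · exact Finset.mem_union_left _ (Finset.mem_image_of_mem _ (Finset.mem_Iic.2 hi))
      · exact Finset.mem_union_right _ (Finset.mem_image_of_mem _ (Finset.mem_Iic.2 hi))
    _ ≤ eVariationOn f t + eVariationOn g t := eVariationOn_max_add_min_le_of_finset t ht f g
    _ ≤ eVariationOn f s + eVariationOn g s :=
      add_le_add (eVariationOn.mono f hts) (eVariationOn.mono g hts)

theorem min_max_variation (s : Set ℝ) (f g : ℝ → ℝ) :
    (eVariationOn (fun x => max (f x) (g x)) s +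
      eVariationOn (fun x => min (f x) (g x)) s ≤
      eVariationOn f s + eVariationOn g s) ∧
    (BoundedVariationOn f s → BoundedVariationOn g s →
      BoundedVariationOn (fun x => max (f x) (g x)) s ∧
      BoundedVariationOn (fun x => min (f x) (g x)) s) := by
  have key := eVariationOn_max_add_min_le s f g
  refine ⟨key, fun hf hg ↦ ?_⟩
  exact ENNReal.add_ne_top.1 (ne_top_of_le_ne_top (ENNReal.add_ne_top.2 ⟨hf, hg⟩) key)
end

section
/- Define u : ℝ → ℝ by u(x) = 2^{⌊1/x⌋} for x < 0 and u(x) = 0 for x ≥ 0 (where ⌊·⌋ is the floor function). Then: (1) u is nonincreasing on [−1, 1]; (2) u is continuous at 0; (3) for every δ > 0 there exists a point y with −δ < y < 0 at which u is not continuous; in particular u is not continuous on any open interval (−δ, δ). -/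
/-!
Monotonicity is that of `x ↦ 1 / x` on the negative reals, of the floor and of `2 ^ ·`.
Continuity at `0` follows from `0 ≤ u x ≤ |x|`, a consequence of `n < 2 ^ n`
applied to `n = -⌊1 / x⌋ ≥ -1 / x`.  At `y = -1 / (n + 1)` the function has a jump:
`u y = 2 ^ (-(n + 1))`, whereas `⌊1 / x⌋ ≤ -(n + 1) - 1` for `y < x < 0`, so that
`u x ≤ u y / 2` immediately to the right of `y`.
-/

open Set

theorem two_zpow_floor_inv_le {x : ℝ} (hx : x < 0) : (2 : ℝ) ^ (⌊1 / x⌋ : ℤ) ≤ -x := by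
  have h1 : 1 / x < 0 := one_div_neg.mpr hx
  have h2 : (⌊1 / x⌋ : ℝ) ≤ 1 / x := Int.floor_le _
  have h3 : ⌊1 / x⌋ ≤ 0 := by
    have : (⌊1 / x⌋ : ℝ) < 0 := by linarith
    exact_mod_cast this.le
  obtain ⟨n, hn⟩ := Int.exists_eq_neg_ofNat h3
  rw [hn] at h2 ⊢
  push_cast at h2
  rw [zpow_neg, zpow_natCast]
  have h4 : (n : ℝ) < 2 ^ n := by exact_mod_cast Nat.lt_two_pow_self
  have h5 : (-x)⁻¹ ≤ 2 ^ n := by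
    rw [inv_neg, ← one_div]
    linarith
  exact inv_le_of_inv_le₀ (by linarith) h5

theorem monotone_cont_at_point_not_on_nbhd
    (u : ℝ → ℝ)
    (hu : u = fun x => if x < 0 then (2 : ℝ) ^ (⌊1 / x⌋ : ℤ) else 0) :
    AntitoneOn u (Icc (-1 : ℝ) 1) ∧
    ContinuousAt u 0 ∧
    ∀ δ > (0 : ℝ), ∃ y : ℝ, -δ < y ∧ y < 0 ∧ ¬ ContinuousAt u y := by
  have hneg : ∀ x < 0, u x = (2 : ℝ) ^ (⌊1 / x⌋ : ℤ) := fun x hx => by simp only [hu, if_pos hx]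
  have hnn : ∀ x, 0 ≤ x → u x = 0 := fun x hx => by simp only [hu, if_neg hx.not_gt]
  have hpos : ∀ x, 0 ≤ u x := fun x => by
    rcases lt_or_ge x 0 with h | h
    · rw [hneg x h]; positivity
    · rw [hnn x h]
  refine ⟨?_, ?_, ?_⟩
  · intro x _ y _ hxy
    rcases lt_or_ge y 0 with hy | hy
    · rw [hneg y hy, hneg x (hxy.trans_lt hy)]
      exact zpow_le_zpow_right₀ one_le_two
        (Int.floor_mono (one_div_le_one_div_of_neg_of_le hy hxy))
    · rw [hnn y hy]; exact hpos x
  · have hle : ∀ x, u x ≤ |x| := fun x => by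
      rcases lt_or_ge x 0 with h | h
      · rw [hneg x h, abs_of_neg h]; exact two_zpow_floor_inv_le h
      · rw [hnn x h]; exact abs_nonneg x
    have habs : Filter.Tendsto (fun x : ℝ => |x|) (nhds 0) (nhds 0) := by
      simpa using (continuous_abs.tendsto (0 : ℝ))
    rw [ContinuousAt, hnn 0 le_rfl]
    exact squeeze_zero hpos hle habs
  · intro δ hδ
    obtain ⟨n, hn⟩ := exists_nat_one_div_lt hδ
    have hn0 : (0 : ℝ) < 1 / ((n : ℝ) + 1) := by positivity
    have hy : -(1 / ((n : ℝ) + 1)) < 0 := by linarith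
    refine ⟨-(1 / ((n : ℝ) + 1)), by linarith, hy, fun hc => ?_⟩
    have hinv : 1 / (-(1 / ((n : ℝ) + 1))) = ((-(n + 1) : ℤ) : ℝ) := by
      push_cast
      rw [one_div_neg_eq_neg_one_div, one_div_one_div]
    have huy : u (-(1 / ((n : ℝ) + 1))) = 2 ^ (-(n + 1) : ℤ) := by
      rw [hneg _ hy, hinv, Int.floor_intCast]
    have hlt : (2 : ℝ) ^ (-(n + 1) - 1 : ℤ) < u (-(1 / ((n : ℝ) + 1))) := by
      rw [huy]
      exact zpow_lt_zpow_right₀ one_lt_two (by omega)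
    have hev := (hc.eventually (lt_mem_nhds hlt)).filter_mono
      (nhdsWithin_le_nhds (s := Ioi (-(1 / ((n : ℝ) + 1)))))
    obtain ⟨x, hx, hxI⟩ := (hev.and (Ioo_mem_nhdsGT hy)).exists
    refine hx.not_ge ?_
    rw [hneg x hxI.2]
    refine zpow_le_zpow_right₀ one_le_two ?_
    have h1 : 1 / x < ((-(n + 1) : ℤ) : ℝ) := by
      rw [← hinv]
      exact one_div_lt_one_div_of_neg_of_lt hxI.2 hxI.1
    have := Int.floor_lt.mpr h1
    omega
end

section
/- Let (α, μ) be a measure space, let p ≥ 1 be a real number, let f, g : α → ℝ be nonnegative measurable functions, and let λ₁ ≥ λ₂ ≥ 0 be real numbers. Then λ₁ · ∫ min(f, g)^p dμ + λ₂ · ∫ max(f, g)^p dμ ≤ λ₁ · ∫ f^p dμ + λ₂ · ∫ g^p dμ, where the integrals are Lebesgue integrals with values in ℝ≥0∞ and min, max are taken pointwise. -/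
open MeasureTheory ENNReal

/-!
The inequality already holds pointwise under the integral sign. Where `f x ≤ g x` both sides agree;
where `g x ≤ f x` it is the rearrangement inequality `l₁ b + l₂ a ≤ l₁ a + l₂ b` for `b ≤ a` and
`l₂ ≤ l₁`, with `a = f x ^ p` and `b = g x ^ p`. Linearity and monotonicity of the Lebesgue
integral then give the claim, without the layer cake formula.
-/

theorem weighted_min_max_rearrangement
    {α : Type*} [MeasurableSpace α] (μ : Measure α) (p : ℝ) (hp : 1 ≤ p)
    (f g : α → ℝ) (hf : Measurable f) (hg : Measurable g)
    (hf0 : ∀ x, 0 ≤ f x) (hg0 : ∀ x, 0 ≤ g x)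
    (l₁ l₂ : ℝ) (hl₂ : 0 ≤ l₂) (hl : l₂ ≤ l₁) :
    ENNReal.ofReal l₁ * ∫⁻ x, ENNReal.ofReal (min (f x) (g x) ^ p) ∂μ +
      ENNReal.ofReal l₂ * ∫⁻ x, ENNReal.ofReal (max (f x) (g x) ^ p) ∂μ ≤
    ENNReal.ofReal l₁ * ∫⁻ x, ENNReal.ofReal (f x ^ p) ∂μ +
      ENNReal.ofReal l₂ * ∫⁻ x, ENNReal.ofReal (g x ^ p) ∂μ := by
  have hp0 : 0 ≤ p := zero_le_one.trans hp
  rw [← lintegral_const_mul _ (by fun_prop), ← lintegral_const_mul _ (by fun_prop),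
    ← lintegral_const_mul _ (by fun_prop), ← lintegral_const_mul _ (by fun_prop),
    ← lintegral_add_left (by fun_prop), ← lintegral_add_left (by fun_prop)]
  refine lintegral_mono fun x => ?_
  rcases le_total (f x) (g x) with h | h
  · simp only [min_eq_left h, max_eq_right h, le_refl]
  · simp only [min_eq_right h, max_eq_left h]
    have hfp := Real.rpow_nonneg (hf0 x) p
    have hgp := Real.rpow_nonneg (hg0 x) p
    have hfg : g x ^ p ≤ f x ^ p := Real.rpow_le_rpow (hg0 x) h hp0
    have hl₁ : 0 ≤ l₁ := hl₂.trans hl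
    rw [← ENNReal.ofReal_mul hl₁, ← ENNReal.ofReal_mul hl₂, ← ENNReal.ofReal_mul hl₁,
      ← ENNReal.ofReal_mul hl₂, ← ENNReal.ofReal_add (by positivity) (by positivity),
      ← ENNReal.ofReal_add (by positivity) (by positivity)]
    refine ENNReal.ofReal_le_ofReal ?_
    nlinarith [mul_nonneg (sub_nonneg.2 hl) (sub_nonneg.2 hfg)]
end

section
/- Let (α, μ) be a measure space, let p ≥ 1 be a real number, let f, g : α → ℝ be nonnegative measurable functions with ∫ f^p dμ < ∞ and ∫ g^p dμ < ∞, and let λ₁ > λ₂ ≥ 0 be real numbers. If λ₁ · ∫ f^p dμ + λ₂ · ∫ g^p dμ ≤ λ₁ · ∫ min(f, g)^p dμ + λ₂ · ∫ max(f, g)^p dμ, then f ≤ g μ-almost everywhere. -/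
/-!
Pointwise `{min (f, g), max (f, g)} = {f, g}`, so the integrals of `min ^ p` and `max ^ p` add up
to those of `f ^ p` and `g ^ p`. Eliminating the integral of `max ^ p` turns the hypothesis into
`(l₁ - l₂) * (∫ f ^ p - ∫ min (f, g) ^ p) ≤ 0`, hence `∫ f ^ p ≤ ∫ min (f, g) ^ p < ∞`. As
`min (f, g) ^ p ≤ f ^ p` pointwise, the two agree almost everywhere, and injectivity of `t ↦ t ^ p`
on the nonnegative reals gives `min (f, g) = f`, that is `f ≤ g`, almost everywhere.
-/

open MeasureTheory ENNReal

theorem reverse_rearrangement_ae_le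
    {α : Type*} [MeasurableSpace α] (μ : Measure α) (p : ℝ) (hp : 1 ≤ p)
    (f g : α → ℝ) (hf : Measurable f) (hg : Measurable g)
    (hf0 : ∀ x, 0 ≤ f x) (hg0 : ∀ x, 0 ≤ g x)
    (hfin₁ : ∫⁻ x, ENNReal.ofReal (f x ^ p) ∂μ < ⊤)
    (hfin₂ : ∫⁻ x, ENNReal.ofReal (g x ^ p) ∂μ < ⊤)
    (l₁ l₂ : ℝ) (hl₂ : 0 ≤ l₂) (hl : l₂ < l₁)
    (hineq :
      ENNReal.ofReal l₁ * ∫⁻ x, ENNReal.ofReal (f x ^ p) ∂μ +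
        ENNReal.ofReal l₂ * ∫⁻ x, ENNReal.ofReal (g x ^ p) ∂μ ≤
      ENNReal.ofReal l₁ * ∫⁻ x, ENNReal.ofReal (min (f x) (g x) ^ p) ∂μ +
        ENNReal.ofReal l₂ * ∫⁻ x, ENNReal.ofReal (max (f x) (g x) ^ p) ∂μ) :
    ∀ᵐ x ∂μ, f x ≤ g x := by
  have hp0 : 0 < p := by linarith
  have hmin_le : ∀ x, ENNReal.ofReal (min (f x) (g x) ^ p) ≤ ENNReal.ofReal (f x ^ p) := fun x =>
    ENNReal.ofReal_le_ofReal
      (Real.rpow_le_rpow (le_min (hf0 x) (hg0 x)) (min_le_left _ _) hp0.le)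
  have hsum : ∫⁻ x, ENNReal.ofReal (min (f x) (g x) ^ p) ∂μ +
      ∫⁻ x, ENNReal.ofReal (max (f x) (g x) ^ p) ∂μ =
      ∫⁻ x, ENNReal.ofReal (f x ^ p) ∂μ + ∫⁻ x, ENNReal.ofReal (g x ^ p) ∂μ := by
    rw [← lintegral_add_left (by fun_prop), ← lintegral_add_left (by fun_prop)]
    refine lintegral_congr fun x => ?_
    rcases le_total (f x) (g x) with h | h
    · simp [h]
    · simp [h, add_comm]
  have hmin_fin : ∫⁻ x, ENNReal.ofReal (min (f x) (g x) ^ p) ∂μ ≠ ⊤ :=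
    ((lintegral_mono hmin_le).trans_lt hfin₁).ne
  have hmax_fin : ∫⁻ x, ENNReal.ofReal (max (f x) (g x) ^ p) ∂μ ≠ ⊤ :=
    ((le_add_self.trans_eq hsum).trans_lt (ENNReal.add_lt_top.2 ⟨hfin₁, hfin₂⟩)).ne
  have hle : ∫⁻ x, ENNReal.ofReal (f x ^ p) ∂μ ≤
      ∫⁻ x, ENNReal.ofReal (min (f x) (g x) ^ p) ∂μ := by
    -- All four integrals are finite, so this is an inequality between real numbers.
    generalize ∫⁻ x, ENNReal.ofReal (f x ^ p) ∂μ = F at *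
    generalize ∫⁻ x, ENNReal.ofReal (g x ^ p) ∂μ = G at *
    generalize ∫⁻ x, ENNReal.ofReal (min (f x) (g x) ^ p) ∂μ = m at *
    generalize ∫⁻ x, ENNReal.ofReal (max (f x) (g x) ^ p) ∂μ = M at *
    lift F to NNReal using hfin₁.ne
    lift G to NNReal using hfin₂.ne
    lift m to NNReal using hmin_fin
    lift M to NNReal using hmax_fin
    lift l₂ to NNReal using hl₂
    lift l₁ to NNReal using l₂.2.trans hl.le
    simp only [ENNReal.ofReal_coe_nnreal] at hineq
    norm_cast at hineq hsum hl ⊢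
    rw [← NNReal.coe_le_coe] at hineq ⊢
    rw [← NNReal.coe_lt_coe] at hl
    rw [← NNReal.coe_inj] at hsum
    push_cast at hineq hsum
    have hM : (M : ℝ) = F + G - m := by linarith
    rw [hM] at hineq
    by_contra! hlt
    nlinarith [mul_pos (sub_pos.2 hl) (sub_pos.2 hlt)]
  have hae := ae_eq_of_ae_le_of_lintegral_le (Filter.Eventually.of_forall hmin_le) hmin_fin
    (by fun_prop) hle
  filter_upwards [hae] with x hx
  rw [ENNReal.ofReal_eq_ofReal_iff (Real.rpow_nonneg (le_min (hf0 x) (hg0 x)) _)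
    (Real.rpow_nonneg (hf0 x) _),
    Real.rpow_left_inj (le_min (hf0 x) (hg0 x)) (hf0 x) hp0.ne'] at hx
  exact min_eq_left_iff.1 hx
end
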